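/- Let F : ℝ^m → ℝ be L-smooth and bounded below, set L' = L + 1, and let (z_k) be generated by z_{k+1} = z_k + t_k s_k with ‖g_k − ∇F(z_k)‖₂ ≤ δ_k, c₁‖g_k‖₂² ≤ −g_kᵀ s_k, ‖s_k‖₂ ≤ c₂‖g_k‖₂, and δ_k ≤ β‖g_k‖₂ for some β ∈ [0, c₁/(c₂√L')). Suppose t_k ∈ [t̄₁ + γ, t̄₂ − γ] for all k, where t̄₁ = (c₁ − √Δ)/(c₂² L'), t̄₂ = (c₁ + √Δ)/(c₂² L'), Δ = c₁² − L' c₂² β², and γ ∈ (0, (t̄₂ − t̄₁)/2]. Then g_k → 0 and ∇F(z_k) → 0 as k → ∞. -/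

import Mathlib

open scoped RealInnerProductSpace

lemma descent_aux {E : Type*} [NormedAddCommGroup E] [InnerProductSpace ℝ E] [CompleteSpace E]
    (F : E → ℝ) (L : ℝ) (hdiff : Differentiable ℝ F)
    (hlip : ∀ x y : E, ‖gradient F x - gradient F y‖ ≤ L * ‖x - y‖) (x v : E) :
    F (x + v) ≤ F x + ⟪gradient F x, v⟫ + L / 2 * ‖v‖ ^ 2 := by
  have hd : ∀ u : ℝ, HasDerivAt
      (fun u : ℝ => F (x + u • v) - u * ⟪gradient F x, v⟫ - L / 2 * ‖v‖ ^ 2 * u ^ 2)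
      (⟪gradient F (x + u • v), v⟫ - ⟪gradient F x, v⟫ - L / 2 * ‖v‖ ^ 2 * (2 * u)) u := by
    intro u
    have h1 : HasDerivAt (fun u : ℝ => x + u • v) v u := by
      simpa using ((hasDerivAt_id u).smul_const v).const_add x
    have h2 := ((hdiff (x + u • v)).hasGradientAt).hasFDerivAt.comp_hasDerivAt u h1
    have h3 : HasDerivAt (fun u : ℝ => F (x + u • v)) ⟪gradient F (x + u • v), v⟫ u := by
      simpa [Function.comp_def] using h2
    have h4 : HasDerivAt (fun u : ℝ => u * ⟪gradient F x, v⟫) ⟪gradient F x, v⟫ u := by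
      simpa using (hasDerivAt_id u).mul_const ⟪gradient F x, v⟫
    have h5 : HasDerivAt (fun u : ℝ => L / 2 * ‖v‖ ^ 2 * u ^ 2) (L / 2 * ‖v‖ ^ 2 * (2 * u)) u := by
      simpa using (hasDerivAt_pow 2 u).const_mul (L / 2 * ‖v‖ ^ 2)
    exact (h3.sub h4).sub h5
  have hanti := antitoneOn_of_deriv_nonpos (convex_Icc (0 : ℝ) 1)
    (fun u _ => (hd u).continuousAt.continuousWithinAt)
    (fun u _ => (hd u).differentiableAt.differentiableWithinAt) (by
      intro u hu
      rw [interior_Icc] at hu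
      rw [(hd u).deriv, ← inner_sub_left]
      have h1 := real_inner_le_norm (gradient F (x + u • v) - gradient F x) v
      have h2 := hlip (x + u • v) x
      rw [add_sub_cancel_left, norm_smul, Real.norm_of_nonneg hu.1.le] at h2
      have h3 := mul_le_mul_of_nonneg_right h2 (norm_nonneg v)
      nlinarith)
  have := hanti (Set.left_mem_Icc.2 zero_le_one) (Set.right_mem_Icc.2 zero_le_one) zero_le_one
  simp only [one_smul, zero_smul, add_zero, one_mul, zero_mul, one_pow, mul_one, sub_zero, ne_eq,
    OfNat.ofNat_ne_zero, not_false_eq_true, zero_pow, mul_zero] at this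
  linarith

/-- convergence of inexact and exact gradients to zero under bounded step sizes. -/
theorem stmt_7 (m : ℕ) (F : EuclideanSpace ℝ (Fin m) → ℝ) (L L' : ℝ)
    (hdiff : Differentiable ℝ F)
    (hlip : ∀ x y : EuclideanSpace ℝ (Fin m), ‖gradient F x - gradient F y‖ ≤ L * ‖x - y‖)
    (hbdd : ∃ B : ℝ, ∀ x, B ≤ F x)
    (hL' : L' = L + 1)
    (z s g : ℕ → EuclideanSpace ℝ (Fin m)) (t δ : ℕ → ℝ)
    (c₁ c₂ : ℝ) (hc₁ : 0 < c₁) (hc₂ : 0 < c₂)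
    (hδ : ∀ k, 0 ≤ δ k)
    (hupd : ∀ k, z (k + 1) = z k + t k • s k)
    (herr : ∀ k, ‖g k - gradient F (z k)‖ ≤ δ k)
    (hdesc : ∀ k, c₁ * ‖g k‖ ^ 2 ≤ -⟪g k, s k⟫)
    (hbnd : ∀ k, ‖s k‖ ≤ c₂ * ‖g k‖)
    (β : ℝ) (hβ0 : 0 ≤ β) (hβ1 : β < c₁ / (c₂ * Real.sqrt L'))
    (hδβ : ∀ k, δ k ≤ β * ‖g k‖)
    (Δ t₁ t₂ : ℝ)
    (hΔ : Δ = c₁ ^ 2 - L' * c₂ ^ 2 * β ^ 2)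
    (ht₁ : t₁ = (c₁ - Real.sqrt Δ) / (c₂ ^ 2 * L'))
    (ht₂ : t₂ = (c₁ + Real.sqrt Δ) / (c₂ ^ 2 * L'))
    (γ : ℝ) (hγ0 : 0 < γ) (hγ1 : γ ≤ (t₂ - t₁) / 2)
    (htk : ∀ k, t k ∈ Set.Icc (t₁ + γ) (t₂ - γ)) :
    Filter.Tendsto g Filter.atTop (nhds 0) ∧
      Filter.Tendsto (fun k => gradient F (z k)) Filter.atTop (nhds 0) := by
  rcases Nat.eq_zero_or_pos m with hm | hm
  · subst hm
    have h0 : g = fun _ => 0 := funext fun _ => Subsingleton.elim _ _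
    have h1 : (fun k => gradient F (z k)) = fun _ => 0 := funext fun _ => Subsingleton.elim _ _
    rw [h0, h1]
    exact ⟨tendsto_const_nhds, tendsto_const_nhds⟩
  have hL : 0 ≤ L := by
    have h := (norm_nonneg _).trans (hlip (EuclideanSpace.single ⟨0, hm⟩ (1 : ℝ)) 0)
    simpa using h
  have hLp : 0 < L' := by linarith
  have hc : 0 < c₂ ^ 2 * L' := by positivity
  have hsq : 0 < Real.sqrt Δ := by
    have h1 : t₂ - t₁ = 2 * Real.sqrt Δ / (c₂ ^ 2 * L') := by rw [ht₁, ht₂]; ring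
    by_contra h
    have h2 : Real.sqrt Δ = 0 := le_antisymm (not_lt.1 h) (Real.sqrt_nonneg _)
    rw [h1, h2] at hγ1
    simp at hγ1
    linarith
  have hΔ0 : 0 < Δ := Real.sqrt_pos.1 hsq
  have hss : Real.sqrt Δ ^ 2 = Δ := Real.sq_sqrt hΔ0.le
  have hsc : Real.sqrt Δ ≤ c₁ := by
    apply Real.sqrt_le_iff.2 ⟨hc₁.le, ?_⟩
    have : 0 ≤ L' * c₂ ^ 2 * β ^ 2 := by positivity
    linarith
  have ht1 : 0 ≤ t₁ := by rw [ht₁]; exact div_nonneg (by linarith) hc.le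
  have hsum : c₂ ^ 2 * L' * (t₁ + t₂) = 2 * c₁ := by
    rw [ht₁, ht₂]; field_simp; ring
  have hprod : c₂ ^ 2 * L' * (t₁ * t₂) = β ^ 2 := by
    have : t₁ * t₂ = (c₁ ^ 2 - Real.sqrt Δ ^ 2) / (c₂ ^ 2 * L') ^ 2 := by
      rw [ht₁, ht₂]; ring
    rw [this, hss, hΔ]; field_simp; ring
  have hC : 0 < c₂ ^ 2 * L' * γ ^ 2 / 2 := by positivity
  have hstep : ∀ k, c₂ ^ 2 * L' * γ ^ 2 / 2 * ‖g k‖ ^ 2 ≤ F (z k) - F (z (k + 1)) := by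
    intro k
    obtain ⟨hk1, hk2⟩ := htk k
    have htp : 0 ≤ t k := by linarith
    have hd := descent_aux F L hdiff hlip (z k) (t k • s k)
    rw [← hupd, norm_smul, Real.norm_of_nonneg htp, inner_smul_right] at hd
    have he : ‖g k - gradient F (z k)‖ ≤ β * ‖g k‖ := (herr k).trans (hδβ k)
    have hi := neg_le_of_abs_le (abs_real_inner_le_norm (g k - gradient F (z k)) (s k))
    rw [inner_sub_left] at hi
    have hi1 : ⟪gradient F (z k), s k⟫ ≤ -(c₁ * ‖g k‖ ^ 2) + β * ‖g k‖ * ‖s k‖ := by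
      have := hdesc k
      have := mul_le_mul_of_nonneg_right he (norm_nonneg (s k))
      linarith
    have hi2 := mul_le_mul_of_nonneg_left hi1 htp
    have hs2 : (t k * ‖s k‖) ^ 2 ≤ (t k * (c₂ * ‖g k‖)) ^ 2 := by
      have := hbnd k
      gcongr
    have hs3 := mul_le_mul_of_nonneg_left hs2 hLp.le
    have hy : 0 ≤ (β * ‖g k‖ - t k * ‖s k‖) ^ 2 := sq_nonneg _
    have hq : γ ^ 2 ≤ (t k - t₁) * (t₂ - t k) := by
      rw [sq]
      apply mul_le_mul <;> linarith
    have hq2 := mul_le_mul_of_nonneg_left hq (show 0 ≤ c₂ ^ 2 * L' * ‖g k‖ ^ 2 by positivity)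
    have hq3 : c₂ ^ 2 * L' * ‖g k‖ ^ 2 * ((t k - t₁) * (t₂ - t k))
        = ‖g k‖ ^ 2 * (2 * c₁ * t k - β ^ 2 - c₂ ^ 2 * L' * t k ^ 2) := by
      rw [← hsum, ← hprod]; ring
    rw [hq3] at hq2
    rw [hL'] at hs3 hq2 ⊢
    linarith
  obtain ⟨B, hB⟩ := hbdd
  have hanti : Antitone fun k => F (z k) := antitone_nat_of_succ_le fun k => by
    have := hstep k
    have : 0 ≤ c₂ ^ 2 * L' * γ ^ 2 / 2 * ‖g k‖ ^ 2 := by positivity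
    linarith
  have hlim := tendsto_atTop_ciInf hanti ⟨B, by rintro _ ⟨k, rfl⟩; exact hB _⟩
  have hdif : Filter.Tendsto (fun k => F (z k) - F (z (k + 1))) Filter.atTop (nhds 0) := by
    simpa using hlim.sub (hlim.comp (Filter.tendsto_add_atTop_nat 1))
  have h1 : Filter.Tendsto (fun k => c₂ ^ 2 * L' * γ ^ 2 / 2 * ‖g k‖ ^ 2) Filter.atTop (nhds 0) :=
    squeeze_zero (fun k => by positivity) hstep hdif
  have h2 : Filter.Tendsto (fun k => ‖g k‖ ^ 2) Filter.atTop (nhds 0) := by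
    have := h1.const_mul (c₂ ^ 2 * L' * γ ^ 2 / 2)⁻¹
    simpa only [inv_mul_cancel_left₀ hC.ne', mul_zero] using this
  have h3 : Filter.Tendsto (fun k => ‖g k‖) Filter.atTop (nhds 0) := by
    have := h2.sqrt
    simpa using this
  refine ⟨tendsto_zero_iff_norm_tendsto_zero.2 h3, ?_⟩
  apply squeeze_zero_norm (a := fun k => (1 + β) * ‖g k‖)
  · intro k
    have he : ‖g k - gradient F (z k)‖ ≤ β * ‖g k‖ := (herr k).trans (hδβ k)
    have := norm_le_norm_add_norm_sub (g k) (gradient F (z k))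
    linarith
  · simpa using h3.const_mul (1 + β)
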